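/- arXiv:2501.16339 — 2 statements merged into one kernel-verified Lean document; each statement's English description precedes it below -/
import Mathlib

section
/- Let n be an integer with 1 ≤ n < l. The map j_n : SO_{2n+1}(F) → GL_{2l}(F) defined by j_n(h) = diag(I_{l-n-1}, M'^{-1}·ĥ·M', I_{l-n-1}) is an injective group homomorphism whose image is contained in SO_{2l}(J_{2l,ρ}). -/
/-!
Conjugation by `M'` swaps the two middle coordinates of `F^{2n+2}` up to a scalar, and the inserted
coordinate of `ĥ` is fixed by `ĥ` and splits off, so the scalar `2` cancels: `M'⁻¹ ĥ M'` is `h` with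
a fixed coordinate inserted just *after* the middle one (`conj_eq`). Consequently `j_n(h)` acts as
`h` on the coordinate subspace indexed by the image of the injection `incl : Fin (2n+1) → Fin (2l)`
that sends the middle index to `l - 1` (0-indexed), and as the identity on the complementary
coordinates (`jnMap_eq`).

The form `J_{2l,ρ}` is antidiagonal apart from its central block `diag(1, -ρ)`, so it is block
diagonal for the same decomposition and restricts to `J_{2n+1}` on the image of `incl` (`Jrho_eq`).
Thus in suitable coordinates `j_n(h) = diag(h, 1)` and `J_{2l,ρ} = diag(J_{2n+1}, X)`, from which
the three claims are immediate.
-/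

open Matrix BigOperators

noncomputable section

/-- Entry of a square matrix read with 0-indexed natural-number indices (`0` out of range). -/
def ent {F : Type*} [Field F] {N : ℕ} (g : Matrix (Fin N) (Fin N) F) (i j : ℕ) : F :=
  if h : i < N ∧ j < N then g ⟨i, h.1⟩ ⟨j, h.2⟩ else 0

/-- The antidiagonal matrix `J_n` (entry `(i,j)` is `1` iff `i+j = n+1` in 1-indexed terms). -/
def Jmat (F : Type*) [Field F] (n : ℕ) : Matrix (Fin n) (Fin n) F :=
  Matrix.of fun i j => if (i : ℕ) + (j : ℕ) + 1 = n then 1 else 0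

/-- `J_{2l,ρ} = diag(I_{l-1}, [[0,1],[-ρ,0]], I_{l-1}) · J_{2l}`. -/
def Jrho (F : Type*) [Field F] (l : ℕ) (ρ : F) : Matrix (Fin (2*l)) (Fin (2*l)) F :=
  (Matrix.of fun i j : Fin (2*l) =>
    if (i : ℕ) = l - 1 ∧ (j : ℕ) = l then 1
    else if (i : ℕ) = l ∧ (j : ℕ) = l - 1 then -ρ
    else if i = j ∧ ((i : ℕ) < l - 1 ∨ l + 1 ≤ (i : ℕ)) then 1
    else 0) * Jmat F (2*l)

/-- Membership in the quasi-split even special orthogonal group `SO_{2l}(J_{2l,ρ})`. -/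
def SO2l {F : Type*} [Field F] (l : ℕ) (ρ : F) (g : Matrix (Fin (2*l)) (Fin (2*l)) F) : Prop :=
  g.det = 1 ∧ gᵀ * Jrho F l ρ * g = Jrho F l ρ

/-- Membership in `U_{SO_{2l}}`: upper triangular, all diagonal entries `1`, and in `SO_{2l}`. -/
def USO2l {F : Type*} [Field F] (l : ℕ) (ρ : F) (g : Matrix (Fin (2*l)) (Fin (2*l)) F) : Prop :=
  SO2l l ρ g ∧ (∀ i j : Fin (2*l), (j : ℕ) < (i : ℕ) → g i j = 0) ∧ ∀ i, g i i = 1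

/-- Membership in `SO_{2n+1}(F)`. -/
def SOodd {F : Type*} [Field F] (n : ℕ) (h : Matrix (Fin (2*n+1)) (Fin (2*n+1)) F) : Prop :=
  h.det = 1 ∧ hᵀ * Jmat F (2*n+1) * h = Jmat F (2*n+1)

/-- For `h = [[A,B,C],[D,E,K],[L,P,Q]]` (corner blocks `n×n`),
`ĥ = [[A,0,B,C],[0,1,0,0],[D,0,E,K],[L,0,P,Q]]`, obtained by inserting a row and column
in position `n+1` (1-indexed). -/
def hatOdd {F : Type*} [Field F] (n : ℕ) (h : Matrix (Fin (2*n+1)) (Fin (2*n+1)) F) :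
    Matrix (Fin (2*n+2)) (Fin (2*n+2)) F :=
  Matrix.of fun i j =>
    if (i : ℕ) = n ∨ (j : ℕ) = n then (if i = j then 1 else 0)
    else ent h (if (i : ℕ) < n then (i : ℕ) else (i : ℕ) - 1)
      (if (j : ℕ) < n then (j : ℕ) else (j : ℕ) - 1)

/-- `M' = diag(I_n, [[0,2],[1,0]], I_n) ∈ GL_{2n+2}(F)`. -/
def Mprime (F : Type*) [Field F] (n : ℕ) : Matrix (Fin (2*n+2)) (Fin (2*n+2)) F :=
  Matrix.of fun i j =>
    if (i : ℕ) = n then (if (j : ℕ) = n + 1 then 2 else 0)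
    else if (i : ℕ) = n + 1 then (if (j : ℕ) = n then 1 else 0)
    else if i = j then 1 else 0

/-- The embedding `j_n(h) = diag(I_{l-n-1}, M'⁻¹·ĥ·M', I_{l-n-1}) ∈ GL_{2l}(F)`. -/
def jnMap {F : Type*} [Field F] (l n : ℕ) (h : Matrix (Fin (2*n+1)) (Fin (2*n+1)) F) :
    Matrix (Fin (2*l)) (Fin (2*l)) F :=
  Matrix.of fun i j =>
    if l - n - 1 ≤ (i : ℕ) ∧ (i : ℕ) < l + n + 1 ∧ l - n - 1 ≤ (j : ℕ) ∧ (j : ℕ) < l + n + 1 then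
      ent ((Mprime F n)⁻¹ * hatOdd n h * Mprime F n)
        ((i : ℕ) - (l - n - 1)) ((j : ℕ) - (l - n - 1))
    else if i = j then 1 else 0

/-- `h` with a fixed coordinate inserted right after its middle index, that is, at (0-indexed)
position `n + 1` of `Fin (2n+2)`. -/
def insMat {F : Type*} [Field F] (n : ℕ) (h : Matrix (Fin (2*n+1)) (Fin (2*n+1)) F) :
    Matrix (Fin (2*n+2)) (Fin (2*n+2)) F :=
  Matrix.of fun i j =>
    if (i : ℕ) = n + 1 ∨ (j : ℕ) = n + 1 then (if i = j then 1 else 0)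
    else ent h (if (i : ℕ) ≤ n then (i : ℕ) else (i : ℕ) - 1)
      (if (j : ℕ) ≤ n then (j : ℕ) else (j : ℕ) - 1)

/-- The transposition of the two middle indices of `Fin (2n+2)`. -/
def midSwap (n : ℕ) : Equiv.Perm (Fin (2*n+2)) :=
  Equiv.swap ⟨n, by omega⟩ ⟨n+1, by omega⟩

/-- The scalars `(1, …, 1, 2, 1, …, 1)`, with `2` at index `n`, by which `M'` differs from the
permutation matrix of `midSwap n`. -/
def midScale (F : Type*) [Field F] (n : ℕ) (i : Fin (2*n+2)) : F :=
  if (i : ℕ) = n then 2 else 1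

lemma midSwap_val (n : ℕ) (i : Fin (2*n+2)) :
    ((midSwap n i : Fin (2*n+2)) : ℕ) =
      if (i : ℕ) = n then n + 1 else if (i : ℕ) = n + 1 then n else i := by
  unfold midSwap
  rw [Equiv.swap_apply_def]
  simp only [Fin.ext_iff]
  split_ifs <;> rfl

lemma Mprime_eq (F : Type*) [Field F] (n : ℕ) :
    Mprime F n = (Matrix.diagonal (midScale F n)).submatrix id (midSwap n) := by
  ext i j
  have hs := midSwap_val n j
  simp only [Mprime, Matrix.of_apply, Matrix.submatrix_apply, id, Matrix.diagonal_apply,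
    Fin.ext_iff, hs, midScale]
  split_ifs <;> first | rfl | omega

lemma isUnit_det_Mprime {F : Type*} [Field F] (h2 : (2 : F) ≠ 0) (n : ℕ) :
    IsUnit (Mprime F n).det := by
  rw [Mprime_eq, Matrix.det_permute', Matrix.det_diagonal, isUnit_iff_ne_zero]
  refine mul_ne_zero ?_ (Finset.prod_ne_zero_iff.2 fun i _ => ?_)
  · rcases Int.units_eq_one_or (Equiv.Perm.sign (midSwap n)) with h | h <;> simp [h]
  · unfold midScale
    split_ifs
    exacts [h2, one_ne_zero]

/-- Conjugating `ĥ` by `M'` only moves the inserted coordinate past the middle one: the factor `2`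
meets only the inserted row and column of `ĥ`, whose off-diagonal entries vanish. -/
lemma conj_eq {F : Type*} [Field F] (h2 : (2 : F) ≠ 0) (n : ℕ)
    (h : Matrix (Fin (2*n+1)) (Fin (2*n+1)) F) :
    (Mprime F n)⁻¹ * hatOdd n h * Mprime F n = insMat n h := by
  have key : hatOdd n h * Mprime F n = Mprime F n * insMat n h := by
    ext i j
    have hs := midSwap_val n j
    have ht := midSwap_val n i
    have e1 : (hatOdd n h * Mprime F n) i j
        = hatOdd n h i (midSwap n j) * midScale F n (midSwap n j) := by
      simp [Mprime_eq, Matrix.mul_apply, Matrix.diagonal_apply]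
    have e2 : (Mprime F n * insMat n h) i j
        = midScale F n i * insMat n h (midSwap n i) j := by
      rw [Matrix.mul_apply, Finset.sum_eq_single (midSwap n i)]
      · simp [Mprime_eq, midSwap]
      · intro k _ hk
        have : i ≠ midSwap n k := by
          rintro rfl
          exact hk (by simp [midSwap])
        simp [Mprime_eq, this]
      · simp
    rw [e1, e2]
    by_cases hc : (i : ℕ) = n ∨ ((midSwap n j : Fin (2*n+2)) : ℕ) = n
    -- In the inserted row or column both matrices have Kronecker-delta entries.
    · have hc' : ((midSwap n i : Fin (2*n+2)) : ℕ) = n + 1 ∨ (j : ℕ) = n + 1 := by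
        split_ifs at hs ht <;> omega
      simp only [hatOdd, insMat, Matrix.of_apply]
      rw [if_pos hc, if_pos hc']
      by_cases hij : i = midSwap n j
      · have hji : midSwap n i = j := by simp [hij, midSwap]
        rw [if_pos hij, if_pos hji, ← hij, mul_comm]
      · have hji : midSwap n i ≠ j := by
          rintro rfl
          exact hij (by simp [midSwap])
        rw [if_neg hij, if_neg hji, zero_mul, mul_zero]
    · have hc' : ¬ (((midSwap n i : Fin (2*n+2)) : ℕ) = n + 1 ∨ (j : ℕ) = n + 1) := by
        split_ifs at hs ht <;> omega
      have hi : (if (i : ℕ) < n then (i : ℕ) else (i : ℕ) - 1)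
          = if (midSwap n i : ℕ) ≤ n then (midSwap n i : ℕ) else (midSwap n i : ℕ) - 1 := by
        split_ifs at ht ⊢ <;> omega
      have hj : (if (midSwap n j : ℕ) < n then (midSwap n j : ℕ) else (midSwap n j : ℕ) - 1)
          = if (j : ℕ) ≤ n then (j : ℕ) else (j : ℕ) - 1 := by
        split_ifs at hs ⊢ <;> omega
      simp only [hatOdd, insMat, midScale, Matrix.of_apply]
      rw [if_neg hc, if_neg hc', if_neg (fun e => hc (Or.inr e)),
        if_neg (fun e => hc (Or.inl e)), hi, hj, mul_one, one_mul]
  rw [Matrix.mul_assoc, key, ← Matrix.mul_assoc,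
    Matrix.nonsing_inv_mul _ (isUnit_det_Mprime h2 n), Matrix.one_mul]

/-- The coordinates of `F^{2l}` on which `SO_{2n+1}` acts through `j_n`: the `2n+2` central
ones, except the (0-indexed) `l`-th. -/
def incl (l n : ℕ) (hn : n < l) (k : Fin (2*n+1)) : Fin (2*l) :=
  ⟨(k : ℕ) + (l - n - 1) + (if (k : ℕ) ≤ n then 0 else 1), by have := k.2; split_ifs <;> omega⟩

lemma incl_val (l n : ℕ) (hn : n < l) (k : Fin (2*n+1)) :
    ((incl l n hn k : Fin (2*l)) : ℕ) = k + (l - n - 1) + (if (k : ℕ) ≤ n then 0 else 1) := rfl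

lemma incl_injective (l n : ℕ) (hn : n < l) : Function.Injective (incl l n hn) := by
  intro a b hab
  rw [Fin.ext_iff, incl_val, incl_val] at hab
  apply Fin.ext
  split_ifs at hab <;> omega

lemma notMem_range_incl {l n : ℕ} (hn : n < l) {x : Fin (2*l)}
    (hx : x ∉ Set.range (incl l n hn)) :
    (x : ℕ) < l - n - 1 ∨ (x : ℕ) = l ∨ l + n + 1 ≤ (x : ℕ) := by
  by_contra hc
  push Not at hc
  obtain ⟨h1, h2, h3⟩ := hc
  by_cases hxl : (x : ℕ) < l
  · refine hx ⟨⟨(x : ℕ) - (l - n - 1), by omega⟩, Fin.ext ?_⟩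
    rw [incl_val]
    simp only
    split_ifs <;> omega
  · refine hx ⟨⟨(x : ℕ) - (l - n - 1) - 1, by omega⟩, Fin.ext ?_⟩
    rw [incl_val]
    simp only
    split_ifs <;> omega

/-- The indices of `F^{2l}` split into the image of `incl` and its complement. -/
def splitIdx (l n : ℕ) (hn : n < l) :
    Fin (2*n+1) ⊕ {x : Fin (2*l) // x ∉ Set.range (incl l n hn)} ≃ Fin (2*l) :=
  (Equiv.sumCongr (Equiv.ofInjective _ (incl_injective l n hn)) (Equiv.refl _)).trans
    (Equiv.Set.sumCompl (Set.range (incl l n hn)))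

lemma splitIdx_inl (l n : ℕ) (hn : n < l) (a : Fin (2*n+1)) :
    splitIdx l n hn (Sum.inl a) = incl l n hn a := rfl

lemma splitIdx_inr (l n : ℕ) (hn : n < l)
    (x : {x : Fin (2*l) // x ∉ Set.range (incl l n hn)}) :
    splitIdx l n hn (Sum.inr x) = x.1 := rfl

/-- In the coordinates `splitIdx`, `j_n(h) = diag(h, 1)`. -/
lemma jnMap_eq {F : Type*} [Field F] (h2 : (2 : F) ≠ 0) (l n : ℕ) (hn : n < l)
    (h : Matrix (Fin (2*n+1)) (Fin (2*n+1)) F) :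
    (jnMap l n h).submatrix (splitIdx l n hn) (splitIdx l n hn)
      = Matrix.fromBlocks h 0 0 1 := by
  ext (a | x) (b | y)
  · have hA := a.2
    have hB := b.2
    have ha := incl_val l n hn a
    have hb := incl_val l n hn b
    have hal : (incl l n hn a : ℕ) - (l - n - 1) = a + (if (a : ℕ) ≤ n then 0 else 1) := by omega
    have hbl : (incl l n hn b : ℕ) - (l - n - 1) = b + (if (b : ℕ) ≤ n then 0 else 1) := by omega
    have hcond : l - n - 1 ≤ (incl l n hn a : ℕ) ∧ (incl l n hn a : ℕ) < l + n + 1 ∧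
        l - n - 1 ≤ (incl l n hn b : ℕ) ∧ (incl l n hn b : ℕ) < l + n + 1 := by
      split_ifs at ha hb <;> omega
    have hs : ∀ c : Fin (2*n+1), (if (c : ℕ) + (if (c : ℕ) ≤ n then 0 else 1) ≤ n
        then (c : ℕ) + (if (c : ℕ) ≤ n then 0 else 1)
        else (c : ℕ) + (if (c : ℕ) ≤ n then 0 else 1) - 1) = c := by
      intro c
      split_ifs <;> omega
    have hne : ∀ c : Fin (2*n+1), (c : ℕ) + (if (c : ℕ) ≤ n then 0 else 1) ≠ n + 1 := by
      intro c
      split_ifs <;> omega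
    have hlt : ∀ c : Fin (2*n+1), (c : ℕ) + (if (c : ℕ) ≤ n then 0 else 1) < 2 * n + 2 := by
      intro c
      have := c.2
      split_ifs <;> omega
    simp only [Matrix.submatrix_apply, splitIdx_inl, Matrix.fromBlocks_apply₁₁, jnMap,
      Matrix.of_apply, conj_eq h2]
    rw [if_pos hcond, hal, hbl, ent, dif_pos ⟨hlt a, hlt b⟩]
    simp only [insMat, Matrix.of_apply, hne, or_self, if_false, hs]
    rw [ent, dif_pos ⟨hA, hB⟩]
  · have ha := incl_val l n hn a
    have hy := notMem_range_incl hn y.2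
    have hney : incl l n hn a ≠ y.1 := fun e => y.2 ⟨a, e⟩
    have hneyv : (incl l n hn a : ℕ) ≠ (y.1 : ℕ) := fun e => hney (Fin.ext e)
    simp only [Matrix.submatrix_apply, splitIdx_inl, splitIdx_inr, Matrix.fromBlocks_apply₁₂,
      jnMap, Matrix.of_apply, conj_eq h2, Matrix.zero_apply]
    split_ifs with hc
    · rw [ent, dif_pos ⟨by omega, by omega⟩]
      simp only [insMat, Matrix.of_apply, Fin.ext_iff]
      rw [if_pos (by omega), if_neg (by omega)]
    · rfl
  · have hx := notMem_range_incl hn x.2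
    have hnex : x.1 ≠ incl l n hn b := fun e => x.2 ⟨b, e.symm⟩
    have hnexv : (x.1 : ℕ) ≠ (incl l n hn b : ℕ) := fun e => hnex (Fin.ext e)
    simp only [Matrix.submatrix_apply, splitIdx_inl, splitIdx_inr, Matrix.fromBlocks_apply₂₁,
      jnMap, Matrix.of_apply, conj_eq h2, Matrix.zero_apply]
    split_ifs with hc
    · rw [ent, dif_pos ⟨by omega, by omega⟩]
      simp only [insMat, Matrix.of_apply, Fin.ext_iff]
      rw [if_pos (by omega), if_neg (by omega)]
    · rfl
  · have hx := notMem_range_incl hn x.2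
    have hy := notMem_range_incl hn y.2
    simp only [Matrix.submatrix_apply, splitIdx_inr, Matrix.fromBlocks_apply₂₂,
      jnMap, Matrix.of_apply, conj_eq h2, Matrix.one_apply, Subtype.ext_iff]
    split_ifs with hc he he
    · rw [ent, dif_pos ⟨by omega, by omega⟩]
      simp only [insMat, Matrix.of_apply, Fin.ext_iff]
      rw [if_pos (by omega), if_pos (by omega)]
    · have hev : (x.1 : ℕ) ≠ (y.1 : ℕ) := fun e => he (Fin.ext e)
      rw [ent, dif_pos ⟨by omega, by omega⟩]
      simp only [insMat, Matrix.of_apply, Fin.ext_iff]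
      rw [if_pos (by omega), if_neg (by omega)]
    · rfl
    · rfl

/-- `J_{2l,ρ}` is the antidiagonal matrix with its central `2 × 2` block replaced by
`diag(1, -ρ)`. -/
lemma Jrho_apply {F : Type*} [Field F] (l : ℕ) (hl : 1 ≤ l) (ρ : F) (i j : Fin (2*l)) :
    Jrho F l ρ i j =
      if (i : ℕ) = l - 1 ∧ (j : ℕ) = l - 1 then 1
      else if (i : ℕ) = l ∧ (j : ℕ) = l then -ρ
      else if (i : ℕ) + j + 1 = 2 * l ∧ (i : ℕ) ≠ l - 1 ∧ (i : ℕ) ≠ l then 1 else 0 := by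
  have hi := i.2
  have hj := j.2
  have hr := Fin.val_rev j
  rw [Jrho, Matrix.mul_apply, Finset.sum_eq_single (Fin.rev j)]
  · simp only [Jmat, Matrix.of_apply, hr, Fin.ext_iff]
    rw [if_pos (show 2 * l - (↑j + 1) + ↑j + 1 = 2 * l by omega), mul_one]
    split_ifs <;> first | rfl | omega
  · intro k _ hk
    have hkv : (k : ℕ) ≠ (Fin.rev j : ℕ) := fun e => hk (Fin.ext e)
    simp only [Jmat, Matrix.of_apply]
    rw [if_neg (show ¬ (k : ℕ) + j + 1 = 2 * l by omega), mul_zero]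
  · simp

/-- In the coordinates `splitIdx`, `J_{2l,ρ}` is block diagonal, with first block `J_{2n+1}`. -/
lemma Jrho_eq {F : Type*} [Field F] (l n : ℕ) (hn : n < l) (ρ : F) :
    (Jrho F l ρ).submatrix (splitIdx l n hn) (splitIdx l n hn)
      = Matrix.fromBlocks (Jmat F (2*n+1)) 0 0
        ((Jrho F l ρ).submatrix Subtype.val Subtype.val) := by
  ext (a | x) (b | y)
  · have hA := a.2
    have hB := b.2
    simp only [Matrix.submatrix_apply, splitIdx_inl, Matrix.fromBlocks_apply₁₁,
      Jrho_apply l (by omega), incl_val, Jmat, Matrix.of_apply]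
    split_ifs <;> first | rfl | omega
  · have hA := a.2
    have hy := notMem_range_incl hn y.2
    simp only [Matrix.submatrix_apply, splitIdx_inl, splitIdx_inr, Matrix.fromBlocks_apply₁₂,
      Jrho_apply l (by omega), incl_val, Matrix.zero_apply]
    split_ifs <;> first | rfl | omega
  · have hB := b.2
    have hx := notMem_range_incl hn x.2
    simp only [Matrix.submatrix_apply, splitIdx_inl, splitIdx_inr, Matrix.fromBlocks_apply₂₁,
      Jrho_apply l (by omega), incl_val, Matrix.zero_apply]
    split_ifs <;> first | rfl | omega
  · rfl

lemma submatrix_splitIdx_injective {F : Type*} [Field F] {l n : ℕ} (hn : n < l) :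
    Function.Injective fun A : Matrix (Fin (2*l)) (Fin (2*l)) F =>
      A.submatrix (splitIdx l n hn) (splitIdx l n hn) :=
  (Matrix.reindex (α := F) (splitIdx l n hn).symm (splitIdx l n hn).symm).injective

/-- for `1 ≤ n < l`, `j_n` is an injective group homomorphism from
`SO_{2n+1}(F)` into `SO_{2l}(J_{2l,ρ})`. -/
theorem statement5 (l : ℕ) (hl : 2 ≤ l) (F : Type*) [Field F] (h2 : (2 : F) ≠ 0)
    (ρ : F) (hρ0 : ρ ≠ 0) (hρ : ∀ x : F, x * x ≠ ρ)
    (n : ℕ) (hn1 : 1 ≤ n) (hn2 : n < l) :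
    (∀ h : Matrix (Fin (2*n+1)) (Fin (2*n+1)) F, SOodd n h → SO2l l ρ (jnMap l n h)) ∧
    (∀ h h' : Matrix (Fin (2*n+1)) (Fin (2*n+1)) F, SOodd n h → SOodd n h' →
      jnMap l n (h * h') = jnMap l n h * jnMap l n h') ∧
    (∀ h h' : Matrix (Fin (2*n+1)) (Fin (2*n+1)) F, SOodd n h → SOodd n h' →
      jnMap l n h = jnMap l n h' → h = h') := by
  have mulS : ∀ A B : Matrix (Fin (2*l)) (Fin (2*l)) F,
      (A * B).submatrix (splitIdx l n hn2) (splitIdx l n hn2)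
        = A.submatrix (splitIdx l n hn2) (splitIdx l n hn2)
          * B.submatrix (splitIdx l n hn2) (splitIdx l n hn2) := fun A B =>
    (Matrix.submatrix_mul_equiv A B _ _ _).symm
  refine ⟨fun h hh => ⟨?_, ?_⟩, fun h h' _ _ => ?_, fun h h' _ _ heq => ?_⟩
  · rw [← Matrix.det_submatrix_equiv_self (splitIdx l n hn2), jnMap_eq h2,
      Matrix.det_fromBlocks_zero₂₁, hh.1, Matrix.det_one, mul_one]
  · apply submatrix_splitIdx_injective hn2
    simp only [mulS, ← Matrix.transpose_submatrix, jnMap_eq h2, Jrho_eq,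
      Matrix.fromBlocks_transpose, Matrix.fromBlocks_multiply]
    simp [hh.2]
  · apply submatrix_splitIdx_injective hn2
    simp only [mulS, jnMap_eq h2, Matrix.fromBlocks_multiply]
    simp
  · have := congrArg (fun A => A.submatrix (splitIdx l n hn2) (splitIdx l n hn2)) heq
    simp only [jnMap_eq h2] at this
    exact (Matrix.fromBlocks_inj.1 this).1
end
end

section
/- (Lemma 4.2: properties of Howe vectors) Let W : SO_{2l}(J_{2l,ρ}) → ℂ satisfy: W(u·g) = ψ(u)·W(g) for all u ∈ U_{SO_{2l}} and all g; W(I_{2l}) = 1; and there is a positive integer C with W(g·k) = W(g) for all k ∈ K_C and all g. For m ≥ 1 define W_m(g) = ∫_{U_m} ψ_m(u)^{-1}·W(g·u) dμ_m(u), where μ_m is the Haar probability measure on the compact group U_m (the integrand is locally constant, hence integrable). Then: (1) W_m(I_{2l}) = 1; and (2) if m ≥ C, then W_m(g·h) = ψ_m(h)·W_m(g) for every h ∈ H_m and every g ∈ SO_{2l}(J_{2l,ρ}). -/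
/-!
The first claim is immediate from `W (u) = ψ (u) W (1)`, because `ψ_m` and `ψ` agree on `U_m`
(`psim_eq`): the integrand is `1` almost everywhere.

For the second claim, fix `g` and put `f (x) = ψ_m (x)⁻¹ W (g x)` on `H_m`. Since `ψ_m` is a
character of `H_m` (`psi_mul`), it has to be shown that `∫ f (h u) dμ (u)` over `U_m` does not depend
on `h ∈ H_m` (`integral_Um_translate`).

* Give the `i`-th basis vector the weight `expo l m i`, the exponent in `e_m`; the form `J_{2l,ρ}`
  pairs only opposite weights, and `U_{SO}` is the unipotent radical of the block upper triangular
  parabolic (the two middle vectors have the same weight). The Iwahori decomposition (`iwahori`) says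
  that each `x ∈ H_m` satisfies `x c ∈ U_m` for some block lower triangular `c ∈ H_m`. On the matrix
  level (`exists_block_decomp`) this only requires principal submatrices of a matrix congruent to `1`
  to be invertible over `ℤ_p`; that the factors preserve the form is a comparison of weights
  (`form_of_block`).
* Conjugation by `e_m` shrinks block lower triangular matrices, so `c ∈ K_m ⊆ K_C`, and
  `ψ_m (c) = 1`; thus `f` is right invariant under `c`. Together with the invariance of `μ` under right
  translation by `U_m` this gives `∫ f (h u x) dμ (u) = ∫ f (h u) dμ (u)` for all `h, x ∈ H_m`.
* `f` is right invariant under a normal subgroup of finite index in `H_m`. Averaging the previous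
  identity over `x` in the finite quotient turns the right-hand side into the mean of `f` over that
  quotient, which is independent of `h` (`integral_translate`).
-/

open Matrix BigOperators

noncomputable section

/-- Exponent of the diagonal entry of
`e_m = diag(p^{-2m(l-1)}, …, p^{-2m}, 1, 1, p^{2m}, …, p^{2m(l-1)})`. -/
def expo (l m i : ℕ) : ℤ :=
  if i < l - 1 then -((2 * m * (l - 1 - i) : ℕ) : ℤ)
  else if l + 1 ≤ i then ((2 * m * (i - l) : ℕ) : ℤ)
  else 0

/-- The diagonal matrix `e_m`. -/
def emat (p l m : ℕ) [Fact p.Prime] : Matrix (Fin (2*l)) (Fin (2*l)) ℚ_[p] :=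
  Matrix.diagonal fun i => (p : ℚ_[p]) ^ (expo l m (i : ℕ))

/-- The diagonal matrix `e_m⁻¹`. -/
def ematInv (p l m : ℕ) [Fact p.Prime] : Matrix (Fin (2*l)) (Fin (2*l)) ℚ_[p] :=
  Matrix.diagonal fun i => (p : ℚ_[p]) ^ (-(expo l m (i : ℕ)))

/-- Membership in `K_m = (I_{2l} + p^m·M_{2l}(ℤ_p)) ∩ SO_{2l}(J_{2l,ρ})`. -/
def Km (p l m : ℕ) [Fact p.Prime] (ρ : ℚ_[p])
    (g : Matrix (Fin (2*l)) (Fin (2*l)) ℚ_[p]) : Prop :=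
  SO2l l ρ g ∧
    ∀ i j : Fin (2*l), ‖g i j - (if i = j then 1 else 0)‖ ≤ (p : ℝ) ^ (-(m : ℤ))

/-- Membership in `H_m = e_m·K_m·e_m⁻¹`. -/
def Hm (p l m : ℕ) [Fact p.Prime] (ρ : ℚ_[p])
    (h : Matrix (Fin (2*l)) (Fin (2*l)) ℚ_[p]) : Prop :=
  Km p l m ρ (ematInv p l m * h * emat p l m)

/-- Membership in `U_m = U_{SO_{2l}} ∩ H_m`. -/
def Um (p l m : ℕ) [Fact p.Prime] (ρ : ℚ_[p])
    (u : Matrix (Fin (2*l)) (Fin (2*l)) ℚ_[p]) : Prop :=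
  USO2l l ρ u ∧ Hm p l m ρ u

/-- `λ(g) = Σ_{i=1}^{l-2} g_{i,i+1} + (1/2)·g_{l-1,l+1}` (1-indexed entries as in the paper). -/
def lamU {F : Type*} [Field F] (l : ℕ) (g : Matrix (Fin (2*l)) (Fin (2*l)) F) : F :=
  (∑ i ∈ Finset.range (l - 2), ent g i (i + 1)) + (1/2) * ent g (l - 2) l

/-- `τ_m(k) = ψ₀(p^{-2m}·(Σ_{i=1}^{l-2} k_{i,i+1} + (1/2)·k_{l-1,l+1}))`. -/
def taum (p l m : ℕ) [Fact p.Prime] (ψ₀ : AddChar ℚ_[p] ℂˣ)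
    (k : Matrix (Fin (2*l)) (Fin (2*l)) ℚ_[p]) : ℂˣ :=
  ψ₀ ((p : ℚ_[p]) ^ (-(2 * m : ℤ)) * lamU l k)

/-- `ψ_m(h) = τ_m(e_m⁻¹·h·e_m)`. -/
def psim (p l m : ℕ) [Fact p.Prime] (ψ₀ : AddChar ℚ_[p] ℂˣ)
    (h : Matrix (Fin (2*l)) (Fin (2*l)) ℚ_[p]) : ℂˣ :=
  taum p l m ψ₀ (ematInv p l m * h * emat p l m)

open MeasureTheory

section Howe

variable {p : ℕ} [Fact p.Prime] {l : ℕ}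

/-- Entrywise inclusion of matrices over `ℤ_p` into matrices over `ℚ_p`, as a ring homomorphism. -/
def toQ (p l : ℕ) [Fact p.Prime] :
    Matrix (Fin (2*l)) (Fin (2*l)) ℤ_[p] →+* Matrix (Fin (2*l)) (Fin (2*l)) ℚ_[p] :=
  (PadicInt.Coe.ringHom (p := p)).mapMatrix

/-- Entrywise reduction of matrices over `ℤ_p` modulo `p ^ N`, as a ring homomorphism. -/
def redMod (p l N : ℕ) [Fact p.Prime] :
    Matrix (Fin (2*l)) (Fin (2*l)) ℤ_[p] →+* Matrix (Fin (2*l)) (Fin (2*l)) (ZMod (p ^ N)) :=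
  (PadicInt.toZModPow N (p := p)).mapMatrix

lemma toQ_apply (a : Matrix (Fin (2*l)) (Fin (2*l)) ℤ_[p]) (i j : Fin (2*l)) :
    toQ p l a i j = (a i j : ℚ_[p]) := rfl

lemma redMod_apply (N : ℕ) (a : Matrix (Fin (2*l)) (Fin (2*l)) ℤ_[p]) (i j : Fin (2*l)) :
    redMod p l N a i j = PadicInt.toZModPow N (a i j) := rfl

lemma det_toQ (a : Matrix (Fin (2*l)) (Fin (2*l)) ℤ_[p]) :
    (toQ p l a).det = ((a.det : ℤ_[p]) : ℚ_[p]) :=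
  ((PadicInt.Coe.ringHom (p := p)).map_det a).symm

lemma toQ_injective : Function.Injective (toQ p l) := by
  intro a b h
  ext i j
  exact Subtype.coe_injective (congrFun (congrFun h i) j)

/-! ### The grading of the basis -/

lemma expo_mono (m : ℕ) {i j : ℕ} (h : i ≤ j) : expo l m i ≤ expo l m j := by
  unfold expo
  split_ifs
  · have : 2 * m * (l - 1 - j) ≤ 2 * m * (l - 1 - i) := Nat.mul_le_mul_left _ (by omega)
    omega
  · omega
  · omega
  · omega
  · have : 2 * m * (i - l) ≤ 2 * m * (j - l) := Nat.mul_le_mul_left _ (by omega)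
    omega
  · omega
  · omega
  · omega
  · omega

lemma expo_bound (m i j : ℕ) (hi : i < 2 * l) (hj : j < 2 * l) :
    -((4 * m * l : ℕ) : ℤ) ≤ expo l m i - expo l m j := by
  have key : ∀ k, k < 2 * l → |expo l m k| ≤ ((2 * m * l : ℕ) : ℤ) := by
    intro k hk
    have h1 : 2 * m * (l - 1 - k) ≤ 2 * m * l := Nat.mul_le_mul_left _ (by omega)
    have h2 : 2 * m * (k - l) ≤ 2 * m * l := Nat.mul_le_mul_left _ (by omega)
    unfold expo
    rw [abs_le]
    split_ifs <;> constructor <;> omega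
  have h1 := abs_le.1 (key i hi)
  have h2 := abs_le.1 (key j hj)
  have h3 : 4 * m * l = 2 * m * l + 2 * m * l := by ring
  rw [h3]
  push_cast at *
  linarith [h1.1, h2.2]

lemma expo_step (m i : ℕ) (h : i < l - 2) : expo l m (i + 1) - expo l m i = 2 * m := by
  unfold expo
  rw [if_pos (by omega), if_pos (by omega)]
  obtain ⟨d, rfl⟩ : ∃ d, l = i + 3 + d := ⟨l - (i + 3), by omega⟩
  have h1 : i + 3 + d - 1 - (i + 1) = d + 1 := by omega
  have h2 : i + 3 + d - 1 - i = d + 2 := by omega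
  rw [h1, h2]
  push_cast
  ring

lemma expo_mid (m : ℕ) (hl : 2 ≤ l) : expo l m l - expo l m (l - 2) = 2 * m := by
  unfold expo
  rw [if_neg (by omega), if_neg (by omega), if_pos (by omega)]
  have h2 : l - 1 - (l - 2) = 1 := by omega
  rw [h2]
  push_cast
  ring

/-- The form `J_{2l,ρ}` pairs only basis vectors of opposite weight. -/
lemma Jrho_weight {F : Type*} [Field F] (m : ℕ) (ρ : F) (i j : Fin (2*l))
    (h : Jrho F l ρ i j ≠ 0) : expo l m i + expo l m j = 0 := by
  unfold Jrho at h
  rw [Matrix.mul_apply] at h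
  obtain ⟨k, -, hk⟩ := Finset.exists_ne_zero_of_sum_ne_zero h
  have h1 := left_ne_zero_of_mul hk
  have h2 := right_ne_zero_of_mul hk
  simp only [Jmat, Matrix.of_apply, ne_eq, ite_eq_right_iff, Classical.not_imp] at h2
  have hkj := h2.1
  have hi := i.2
  have hj := j.2
  rw [Matrix.of_apply] at h1
  split_ifs at h1 with c1 c2 c3
  · unfold expo
    rw [if_neg (by omega), if_neg (by omega), if_neg (by omega), if_neg (by omega)]
    rfl
  · unfold expo
    rw [if_neg (by omega), if_neg (by omega), if_neg (by omega), if_neg (by omega)]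
    rfl
  · obtain ⟨rfl, c3⟩ := c3
    unfold expo
    rcases c3 with c3 | c3
    · rw [if_pos c3, if_neg (by omega), if_pos (by omega)]
      have : l - 1 - (i : ℕ) = j - l := by omega
      rw [this]
      ring
    · rw [if_neg (by omega), if_pos c3, if_pos (by omega)]
      have : l - 1 - (j : ℕ) = i - l := by omega
      rw [this]
      ring
  · exact absurd rfl h1

/-! ### Conjugation by the diagonal matrix -/

lemma p_ne : (p : ℚ_[p]) ≠ 0 := by exact_mod_cast (Fact.out : p.Prime).ne_zero

lemma emat_mul_inv (m : ℕ) : emat p l m * ematInv p l m = 1 := by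
  unfold emat ematInv
  rw [Matrix.diagonal_mul_diagonal, ← Matrix.diagonal_one]
  congr 1
  ext i
  rw [← zpow_add₀ p_ne, add_neg_cancel, zpow_zero]

lemma inv_mul_emat (m : ℕ) : ematInv p l m * emat p l m = 1 :=
  mul_eq_one_comm.1 (emat_mul_inv m)

lemma conj_apply (m : ℕ) (k : Matrix (Fin (2*l)) (Fin (2*l)) ℚ_[p]) (i j : Fin (2*l)) :
    (emat p l m * k * ematInv p l m) i j
      = (p : ℚ_[p]) ^ (expo l m i - expo l m j) * k i j := by
  unfold emat ematInv
  rw [Matrix.mul_diagonal, Matrix.diagonal_mul, sub_eq_add_neg, zpow_add₀ p_ne]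
  ring

lemma conjInv_apply (m : ℕ) (k : Matrix (Fin (2*l)) (Fin (2*l)) ℚ_[p]) (i j : Fin (2*l)) :
    (ematInv p l m * k * emat p l m) i j
      = (p : ℚ_[p]) ^ (expo l m j - expo l m i) * k i j := by
  unfold emat ematInv
  rw [Matrix.mul_diagonal, Matrix.diagonal_mul, sub_eq_add_neg, zpow_add₀ p_ne]
  ring

lemma conjInv_conj (m : ℕ) (k : Matrix (Fin (2*l)) (Fin (2*l)) ℚ_[p]) :
    ematInv p l m * (emat p l m * k * ematInv p l m) * emat p l m = k := by
  calc _ = (ematInv p l m * emat p l m) * k * (ematInv p l m * emat p l m) := by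
        simp only [Matrix.mul_assoc]
    _ = k := by rw [inv_mul_emat, Matrix.one_mul, Matrix.mul_one]

lemma conj_conjInv (m : ℕ) (k : Matrix (Fin (2*l)) (Fin (2*l)) ℚ_[p]) :
    emat p l m * (ematInv p l m * k * emat p l m) * ematInv p l m = k := by
  calc _ = (emat p l m * ematInv p l m) * k * (emat p l m * ematInv p l m) := by
        simp only [Matrix.mul_assoc]
    _ = k := by rw [emat_mul_inv, Matrix.one_mul, Matrix.mul_one]

lemma ematInv_J (m : ℕ) (ρ : ℚ_[p]) :
    ematInv p l m * Jrho ℚ_[p] l ρ * ematInv p l m = Jrho ℚ_[p] l ρ := by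
  ext i j
  unfold ematInv
  rw [Matrix.mul_diagonal, Matrix.diagonal_mul]
  by_cases h : Jrho ℚ_[p] l ρ i j = 0
  · rw [h]; ring
  · have hw := Jrho_weight m ρ i j h
    rw [mul_right_comm, ← zpow_add₀ p_ne, show -expo l m i + -expo l m j = 0 by omega, zpow_zero,
      one_mul]

lemma emat_J (m : ℕ) (ρ : ℚ_[p]) :
    emat p l m * Jrho ℚ_[p] l ρ * emat p l m = Jrho ℚ_[p] l ρ := by
  conv_lhs => rw [← ematInv_J m ρ]
  calc _ = (emat p l m * ematInv p l m) * Jrho ℚ_[p] l ρ * (ematInv p l m * emat p l m) := by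
        simp only [Matrix.mul_assoc]
    _ = _ := by rw [emat_mul_inv, inv_mul_emat, Matrix.one_mul, Matrix.mul_one]

lemma SO2l_mul {F : Type*} [Field F] {ρ : F} {g h : Matrix (Fin (2*l)) (Fin (2*l)) F}
    (hg : SO2l l ρ g) (hh : SO2l l ρ h) : SO2l l ρ (g * h) := by
  refine ⟨by rw [Matrix.det_mul, hg.1, hh.1, one_mul], ?_⟩
  calc _ = hᵀ * (gᵀ * Jrho F l ρ * g) * h := by
        rw [Matrix.transpose_mul]; simp only [Matrix.mul_assoc]
    _ = _ := by rw [hg.2, hh.2]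

lemma SO2l_one {F : Type*} [Field F] {ρ : F} :
    SO2l l ρ (1 : Matrix (Fin (2*l)) (Fin (2*l)) F) := by
  refine ⟨Matrix.det_one, by simp⟩

lemma SO2l_of_mul {F : Type*} [Field F] {ρ : F} {g h : Matrix (Fin (2*l)) (Fin (2*l)) F}
    (hg : SO2l l ρ g) (hgh : SO2l l ρ (g * h)) : SO2l l ρ h := by
  refine ⟨by simpa [Matrix.det_mul, hg.1] using hgh.1, ?_⟩
  calc _ = hᵀ * (gᵀ * Jrho F l ρ * g) * h := by rw [hg.2]
    _ = (g * h)ᵀ * Jrho F l ρ * (g * h) := by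
        rw [Matrix.transpose_mul]; simp only [Matrix.mul_assoc]
    _ = _ := hgh.2

lemma SO2l_conj (m : ℕ) {ρ : ℚ_[p]} {k : Matrix (Fin (2*l)) (Fin (2*l)) ℚ_[p]}
    (hk : SO2l l ρ k) : SO2l l ρ (emat p l m * k * ematInv p l m) := by
  have h1 : (emat p l m)ᵀ = emat p l m := Matrix.diagonal_transpose _
  have h2 : (ematInv p l m)ᵀ = ematInv p l m := Matrix.diagonal_transpose _
  constructor
  · rw [Matrix.det_mul, Matrix.det_mul, mul_right_comm, ← Matrix.det_mul, emat_mul_inv, hk.1]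
    simp
  · calc _ = ematInv p l m * (kᵀ * (emat p l m * Jrho ℚ_[p] l ρ * emat p l m) * k)
            * ematInv p l m := by
          rw [Matrix.transpose_mul, Matrix.transpose_mul, h1, h2]; simp only [Matrix.mul_assoc]
      _ = _ := by rw [emat_J, hk.2, ematInv_J]

/-! ### The linear form defining the characters -/

lemma ent_add {F : Type*} [Field F] {N : ℕ} (A B : Matrix (Fin N) (Fin N) F) (i j : ℕ) :
    ent (A + B) i j = ent A i j + ent B i j := by
  unfold ent; split_ifs <;> simp

lemma lamU_add {F : Type*} [Field F] (A B : Matrix (Fin (2*l)) (Fin (2*l)) F) :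
    lamU l (A + B) = lamU l A + lamU l B := by
  simp only [lamU, ent_add, Finset.sum_add_distrib]; ring

lemma lamU_eq_zero (m : ℕ) (hm : 1 ≤ m) (hl : 2 ≤ l) (A : Matrix (Fin (2*l)) (Fin (2*l)) ℚ_[p])
    (h : ∀ i j : Fin (2*l), expo l m i < expo l m j → A i j = 0) : lamU l A = 0 := by
  unfold lamU
  have h1 : ∀ i ∈ Finset.range (l - 2), ent A i (i + 1) = 0 := by
    intro i hi
    rw [Finset.mem_range] at hi
    have := expo_step m i hi
    unfold ent
    rw [dif_pos ⟨by omega, by omega⟩]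
    apply h
    simp only
    omega
  have h2 : ent A (l - 2) l = 0 := by
    have := expo_mid m hl
    unfold ent
    rw [dif_pos ⟨by omega, by omega⟩]
    apply h
    simp only
    omega
  rw [Finset.sum_eq_zero h1, h2]; ring

lemma lamU_conjInv (m : ℕ) (hl : 2 ≤ l) (A : Matrix (Fin (2*l)) (Fin (2*l)) ℚ_[p]) :
    lamU l (ematInv p l m * A * emat p l m) = (p : ℚ_[p]) ^ (2 * m : ℤ) * lamU l A := by
  unfold lamU
  rw [mul_add, Finset.mul_sum]
  congr 1
  · apply Finset.sum_congr rfl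
    intro i hi
    rw [Finset.mem_range] at hi
    unfold ent
    rw [dif_pos ⟨by omega, by omega⟩, dif_pos ⟨by omega, by omega⟩, conjInv_apply]
    simp only
    rw [expo_step m i hi]
  · unfold ent
    rw [dif_pos ⟨by omega, by omega⟩, dif_pos ⟨by omega, by omega⟩, conjInv_apply]
    simp only
    rw [expo_mid m hl]
    ring

/-- On all matrices `ψ_m` is the formula defining `ψ` on the unipotent group. -/
lemma psim_eq (m : ℕ) (hl : 2 ≤ l) (ψ₀ : AddChar ℚ_[p] ℂˣ)
    (h : Matrix (Fin (2*l)) (Fin (2*l)) ℚ_[p]) : psim p l m ψ₀ h = ψ₀ (lamU l h) := by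
  unfold psim taum
  rw [lamU_conjInv m hl, ← mul_assoc, ← zpow_add₀ p_ne, neg_add_cancel, zpow_zero, one_mul]

lemma norm_half (hp : p ≠ 2) : ‖(1 / 2 : ℚ_[p])‖ = 1 := by
  have : ‖((2 : ℕ) : ℚ_[p])‖ = 1 := by
    rw [Padic.norm_natCast_eq_one_iff]
    exact (Nat.coprime_primes Fact.out Nat.prime_two).2 hp
  rw [norm_div, norm_one]
  push_cast at this
  rw [this, div_one]

lemma norm_lamU_le (hp : p ≠ 2) (A : Matrix (Fin (2*l)) (Fin (2*l)) ℚ_[p]) (r : ℝ) (hr : 0 ≤ r)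
    (h : ∀ i j, ‖A i j‖ ≤ r) : ‖lamU l A‖ ≤ r := by
  have hent : ∀ i j, ‖ent A i j‖ ≤ r := by
    intro i j
    unfold ent
    split_ifs
    · exact h _ _
    · simpa using hr
  unfold lamU
  refine (IsUltrametricDist.norm_add_le_max _ _).trans (max_le ?_ ?_)
  · exact IsUltrametricDist.norm_sum_le_of_forall_le_of_nonneg hr fun i _ => hent _ _
  · rw [norm_mul, norm_half hp, one_mul]; exact hent _ _

/-! ### Integral matrices and congruence subgroups -/

lemma toZModPow_eq_iff (N : ℕ) (x y : ℤ_[p]) :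
    PadicInt.toZModPow N x = PadicInt.toZModPow N y ↔ ‖x - y‖ ≤ (p : ℝ) ^ (-(N : ℤ)) := by
  rw [PadicInt.norm_le_pow_iff_mem_span_pow, ← PadicInt.ker_toZModPow, RingHom.mem_ker, map_sub,
    sub_eq_zero]

lemma redMod_eq_iff (N : ℕ) (a b : Matrix (Fin (2*l)) (Fin (2*l)) ℤ_[p]) :
    redMod p l N a = redMod p l N b ↔
      ∀ i j, ‖toQ p l a i j - toQ p l b i j‖ ≤ (p : ℝ) ^ (-(N : ℤ)) := by
  constructor
  · intro h i j
    have := congrFun (congrFun h i) j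
    rw [redMod_apply, redMod_apply, toZModPow_eq_iff] at this
    rw [toQ_apply, toQ_apply, ← PadicInt.coe_sub, PadicInt.padic_norm_e_of_padicInt]
    exact this
  · intro h
    ext i j
    rw [redMod_apply, redMod_apply, toZModPow_eq_iff]
    have := h i j
    rwa [toQ_apply, toQ_apply, ← PadicInt.coe_sub, PadicInt.padic_norm_e_of_padicInt] at this

lemma Km_toQ_iff (N : ℕ) (ρ : ℚ_[p]) (a : Matrix (Fin (2*l)) (Fin (2*l)) ℤ_[p]) :
    Km p l N ρ (toQ p l a) ↔ SO2l l ρ (toQ p l a) ∧ redMod p l N a = 1 := by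
  unfold Km
  rw [← map_one (redMod p l N), redMod_eq_iff]
  simp only [map_one, Matrix.one_apply]

lemma Km_lift {m : ℕ} {ρ : ℚ_[p]} {k : Matrix (Fin (2*l)) (Fin (2*l)) ℚ_[p]}
    (hk : Km p l m ρ k) : ∃ a : (Matrix (Fin (2*l)) (Fin (2*l)) ℤ_[p])ˣ, toQ p l a = k := by
  have hint : ∀ i j, ‖k i j‖ ≤ 1 := by
    intro i j
    have h1 : ‖k i j - (if i = j then 1 else 0)‖ ≤ 1 :=
      (hk.2 i j).trans (zpow_le_one_of_nonpos₀
        (by exact_mod_cast (Fact.out : p.Prime).one_lt.le) (by omega))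
    have h2 : ‖(if i = j then 1 else 0 : ℚ_[p])‖ ≤ 1 := by split_ifs <;> simp
    calc ‖k i j‖ = ‖(k i j - (if i = j then 1 else 0)) + (if i = j then 1 else 0)‖ := by
          rw [sub_add_cancel]
      _ ≤ 1 := (IsUltrametricDist.norm_add_le_max _ _).trans (max_le h1 h2)
  let a : Matrix (Fin (2*l)) (Fin (2*l)) ℤ_[p] := Matrix.of fun i j => ⟨k i j, hint i j⟩
  have ha : toQ p l a = k := by ext i j; rfl
  have hdet : a.det = 1 := by
    have := det_toQ a
    rw [ha, hk.1.1] at this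
    exact Subtype.coe_injective this.symm
  have hu : IsUnit a := by
    rw [Matrix.isUnit_iff_isUnit_det, hdet]; exact isUnit_one
  exact ⟨hu.unit, ha⟩

/-- The group `K_m`, realised inside `GL_{2l}(ℤ_p)`. -/
def Kgrp (p l m : ℕ) [Fact p.Prime] (ρ : ℚ_[p]) :
    Subgroup (Matrix (Fin (2*l)) (Fin (2*l)) ℤ_[p])ˣ where
  carrier := {a | Km p l m ρ (toQ p l a)}
  mul_mem' := by
    intro a b ha hb
    simp only [Set.mem_ofPred_eq, Km_toQ_iff, Units.val_mul, map_mul] at ha hb ⊢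
    exact ⟨SO2l_mul ha.1 hb.1, by rw [ha.2, hb.2, one_mul]⟩
  one_mem' := by
    simp only [Set.mem_ofPred_eq, Km_toQ_iff, Units.val_one, map_one]
    exact ⟨SO2l_one, trivial⟩
  inv_mem' := by
    intro a ha
    simp only [Set.mem_ofPred_eq, Km_toQ_iff] at ha ⊢
    have h1 : toQ p l a * toQ p l (a⁻¹ : _ˣ) = 1 := by rw [← map_mul, Units.mul_inv, map_one]
    have h2 : redMod p l m a * redMod p l m (a⁻¹ : _ˣ) = 1 := by
      rw [← map_mul, Units.mul_inv, map_one]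
    exact ⟨SO2l_of_mul ha.1 (h1 ▸ SO2l_one), by rwa [ha.2, one_mul] at h2⟩

/-- The isomorphism `k ↦ e_m·k·e_m⁻¹` of `K_m` onto `H_m`. -/
def emb (p l m : ℕ) [Fact p.Prime] (ρ : ℚ_[p]) (a : Kgrp p l m ρ) :
    Matrix (Fin (2*l)) (Fin (2*l)) ℚ_[p] :=
  emat p l m * toQ p l a.1 * ematInv p l m

variable {m : ℕ} {ρ : ℚ_[p]}

lemma emb_mul (a b : Kgrp p l m ρ) : emb p l m ρ (a * b) = emb p l m ρ a * emb p l m ρ b := by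
  unfold emb
  calc _ = emat p l m * toQ p l a.1 * 1 * toQ p l b.1 * ematInv p l m := by
        simp [Matrix.mul_assoc]
    _ = _ := by rw [← inv_mul_emat m]; simp only [Matrix.mul_assoc]

lemma emb_SO (a : Kgrp p l m ρ) : SO2l l ρ (emb p l m ρ a) := SO2l_conj m a.2.1

lemma emb_Hm (a : Kgrp p l m ρ) : Hm p l m ρ (emb p l m ρ a) := by
  unfold Hm emb
  rw [conjInv_conj]
  exact a.2

lemma Hm_lift {h : Matrix (Fin (2*l)) (Fin (2*l)) ℚ_[p]} (hh : Hm p l m ρ h) :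
    ∃ a : Kgrp p l m ρ, emb p l m ρ a = h := by
  obtain ⟨a, ha⟩ := Km_lift hh
  refine ⟨⟨a, ?_⟩, ?_⟩
  · change Km p l m ρ (toQ p l a)
    rw [ha]; exact hh
  · unfold emb
    simp only [ha]
    exact conj_conjInv m h

/-- `ψ_m` is multiplicative on `H_m`: in the product of two elements of `1 + p^m M(ℤ_p)` the
correction to additivity lies in `p^{2m} M(ℤ_p)`. -/
lemma psi_mul (hp : p ≠ 2) (hl : 2 ≤ l) (hm : 1 ≤ m) (ψ₀ : AddChar ℚ_[p] ℂˣ)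
    (hψ1 : ∀ x : ℚ_[p], ‖x‖ ≤ 1 → ψ₀ x = 1) (a b : Kgrp p l m ρ) :
    ψ₀ (lamU l (emb p l m ρ (a * b)))
      = ψ₀ (lamU l (emb p l m ρ a)) * ψ₀ (lamU l (emb p l m ρ b)) := by
  simp only [← psim_eq m hl ψ₀]
  unfold psim taum emb
  simp only [conjInv_conj]
  set A := toQ p l a.1
  set B := toQ p l b.1
  have hAB : toQ p l (a * b).1 = A * B := map_mul _ _ _
  have h1 : A * B + 1 = A + B + (A - 1) * (B - 1) := by noncomm_ring
  have h2 := congrArg (lamU l) h1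
  have hone : lamU l (1 : Matrix (Fin (2*l)) (Fin (2*l)) ℚ_[p]) = 0 := by
    apply lamU_eq_zero m hm hl
    intro i j hij
    exact Matrix.one_apply_ne (by rintro rfl; exact lt_irrefl _ hij)
  simp only [lamU_add, hone, add_zero] at h2
  have hpp : (0 : ℝ) < p := by exact_mod_cast (Fact.out : p.Prime).pos
  have hn : ‖lamU l ((A - 1) * (B - 1))‖ ≤ (p : ℝ) ^ (-(2 * m : ℤ)) := by
    apply norm_lamU_le hp _ _ (by positivity)
    intro i j
    rw [Matrix.mul_apply]
    apply IsUltrametricDist.norm_sum_le_of_forall_le_of_nonneg (by positivity)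
    intro k _
    rw [norm_mul, show (-(2 * m : ℤ)) = -(m : ℤ) + -(m : ℤ) by ring, zpow_add₀ hpp.ne']
    have ha := a.2.2 i k
    have hb := b.2.2 k j
    rw [← Matrix.one_apply, ← Matrix.sub_apply] at ha hb
    exact mul_le_mul ha hb (norm_nonneg _) (by positivity)
  have h1' : ψ₀ ((p : ℚ_[p]) ^ (-(2 * m : ℤ)) * lamU l ((A - 1) * (B - 1))) = 1 := by
    apply hψ1
    rw [norm_mul, Padic.norm_p_zpow]
    calc _ ≤ (p : ℝ) ^ (-(-(2 * m : ℤ))) * (p : ℝ) ^ (-(2 * m : ℤ)) := by gcongr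
      _ = 1 := by rw [← zpow_add₀ hpp.ne', neg_add_cancel, zpow_zero]
  rw [hAB, h2, mul_add, mul_add, AddChar.map_add_eq_mul, AddChar.map_add_eq_mul, h1', mul_one]

/-! ### The Iwahori decomposition -/

lemma isUnit_of_toZModPow (hm : 1 ≤ m) (x : ℤ_[p]) (h : PadicInt.toZModPow m x = 1) : IsUnit x := by
  rw [← map_one (PadicInt.toZModPow m), toZModPow_eq_iff] at h
  have h1 : ‖x - 1‖ < 1 := by
    refine h.trans_lt (zpow_lt_one_of_neg₀ ?_ (by omega))
    exact_mod_cast (Fact.out : p.Prime).one_lt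
  by_contra hx
  have h2 : ‖x‖ < 1 := PadicInt.mem_nonunits.1 hx
  have h3 : ‖(1 : ℤ_[p])‖ < 1 := by
    calc ‖(1 : ℤ_[p])‖ = ‖x - (x - 1)‖ := by rw [sub_sub_cancel]
      _ ≤ max ‖x‖ ‖x - 1‖ := by
        rw [sub_eq_add_neg]
        refine (PadicInt.nonarchimedean _ _).trans ?_
        rw [norm_neg]
      _ < 1 := max_lt h2 h1
  simp at h3

/-- A matrix `k ≡ 1` over `ℤ_p` can be multiplied on the right by a block lower triangular `c`
so as to become block upper unipotent: column `j` of `c` solves the linear system whose matrix is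
the principal submatrix of `k` on the indices of weight at least that of `j`. -/
lemma exists_block_decomp (hm : 1 ≤ m) (k : Matrix (Fin (2*l)) (Fin (2*l)) ℤ_[p])
    (hk : redMod p l m k = 1) :
    ∃ c : Matrix (Fin (2*l)) (Fin (2*l)) ℤ_[p],
      (∀ i j : Fin (2*l), expo l m i < expo l m j → c i j = 0) ∧
      (∀ i j : Fin (2*l), expo l m j ≤ expo l m i →
        (k * c) i j = (1 : Matrix (Fin (2*l)) (Fin (2*l)) ℤ_[p]) i j) := by
  have hcol : ∀ j : Fin (2*l), ∃ v : Fin (2*l) → ℤ_[p],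
      (∀ i : Fin (2*l), expo l m i < expo l m j → v i = 0) ∧
      (∀ i : Fin (2*l), expo l m j ≤ expo l m i →
        (k *ᵥ v) i = (1 : Matrix (Fin (2*l)) (Fin (2*l)) ℤ_[p]) i j) := by
    intro j
    let S := {a : Fin (2*l) // expo l m j ≤ expo l m a}
    let ks : Matrix S S ℤ_[p] := k.submatrix Subtype.val Subtype.val
    have hks : (PadicInt.toZModPow m).mapMatrix ks = 1 := by
      ext a b
      have := congrFun (congrFun hk a.1) b.1
      rw [redMod_apply] at this
      rw [RingHom.mapMatrix_apply, Matrix.map_apply]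
      change PadicInt.toZModPow m (k a.1 b.1) = _
      rw [this, Matrix.one_apply, Matrix.one_apply]
      exact if_congr Subtype.ext_iff.symm rfl rfl
    have hdet : IsUnit ks.det := by
      apply isUnit_of_toZModPow hm
      rw [RingHom.map_det, hks, Matrix.det_one]
    let x : S → ℤ_[p] := fun a => ks⁻¹ a ⟨j, le_refl _⟩
    have hx : ∀ a : S, ∑ b : S, k a.1 b.1 * x b = (1 : Matrix S S ℤ_[p]) a ⟨j, le_refl _⟩ := by
      intro a
      have := congrFun (congrFun (Matrix.mul_nonsing_inv ks hdet) a) ⟨j, le_refl _⟩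
      rw [Matrix.mul_apply] at this
      exact this
    refine ⟨fun i => if h : expo l m j ≤ expo l m i then x ⟨i, h⟩ else 0, ?_, ?_⟩
    · intro i hi
      exact dif_neg (not_le.2 hi)
    · intro i hi
      have h1 := hx ⟨i, hi⟩
      rw [Matrix.mulVec, dotProduct]
      rw [Matrix.one_apply] at h1 ⊢
      simp only [Subtype.mk.injEq] at h1
      rw [← h1]
      rw [← Fintype.sum_subtype_add_sum_subtype (fun a : Fin (2*l) => expo l m j ≤ expo l m a)]
      have hz : ∀ a : {a : Fin (2*l) // ¬ expo l m j ≤ expo l m a},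
          (k i a.1 * if h : expo l m j ≤ expo l m a.1 then x ⟨a.1, h⟩ else 0) = 0 :=
        fun a => by rw [dif_neg a.2, mul_zero]
      rw [Fintype.sum_eq_zero _ hz, add_zero]
      exact Fintype.sum_congr _ _ fun a => by rw [dif_pos a.2]
  choose v hv1 hv2 using hcol
  exact ⟨Matrix.of fun i j => v j i, fun i j h => hv1 j i h, fun i j h => hv2 j i h⟩

/-- Weight argument: `uᵀ J u` agrees with `J` in total weight `≤ 0`, while `cᵀ J c` and `J` vanish
in total weight `> 0`. -/
lemma form_of_block {ρ : ℚ_[p]} (m : ℕ) (u c : Matrix (Fin (2*l)) (Fin (2*l)) ℚ_[p])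
    (hu : ∀ i j : Fin (2*l), expo l m j ≤ expo l m i →
      u i j = (1 : Matrix (Fin (2*l)) (Fin (2*l)) ℚ_[p]) i j)
    (hc : ∀ i j : Fin (2*l), expo l m i < expo l m j → c i j = 0)
    (h : uᵀ * Jrho ℚ_[p] l ρ * u = cᵀ * Jrho ℚ_[p] l ρ * c) :
    uᵀ * Jrho ℚ_[p] l ρ * u = Jrho ℚ_[p] l ρ := by
  have expand : ∀ (x : Matrix (Fin (2*l)) (Fin (2*l)) ℚ_[p]) (i j : Fin (2*l)),
      (xᵀ * Jrho ℚ_[p] l ρ * x) i j = ∑ b, ∑ a, x a i * Jrho ℚ_[p] l ρ a b * x b j := by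
    intro x i j
    simp only [Matrix.mul_apply, Matrix.transpose_apply, Finset.sum_mul]
  ext i j
  rcases lt_or_ge 0 (expo l m i + expo l m j) with hij | hij
  · rw [h, expand]
    have hJ : Jrho ℚ_[p] l ρ i j = 0 := by
      by_contra h0
      have := Jrho_weight m ρ i j h0
      omega
    rw [hJ]
    refine Finset.sum_eq_zero fun b _ => Finset.sum_eq_zero fun a _ => ?_
    by_contra h0
    have h1 := right_ne_zero_of_mul h0
    have h2 := right_ne_zero_of_mul (left_ne_zero_of_mul h0)
    have h3 := left_ne_zero_of_mul (left_ne_zero_of_mul h0)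
    have hw := Jrho_weight m ρ a b h2
    have hb : ¬ expo l m b < expo l m j := fun hlt => h1 (hc _ _ hlt)
    have ha : ¬ expo l m a < expo l m i := fun hlt => h3 (hc _ _ hlt)
    omega
  · have hval : ∀ a i : Fin (2*l), u a i ≠ 0 → a = i ∨ expo l m a < expo l m i := by
      intro a i h0
      by_contra! hcon
      exact h0 (by rw [hu a i hcon.2, Matrix.one_apply_ne hcon.1])
    have huu : ∀ i, u i i = 1 := fun i => by rw [hu i i le_rfl, Matrix.one_apply_eq]
    have hzero : ∀ a b : Fin (2*l), ¬ (a = i ∧ b = j) →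
        u a i * Jrho ℚ_[p] l ρ a b * u b j = 0 := by
      intro a b hab
      by_contra h0
      have hw := Jrho_weight m ρ a b (right_ne_zero_of_mul (left_ne_zero_of_mul h0))
      rcases hval b j (right_ne_zero_of_mul h0) with rfl | h1 <;>
      rcases hval a i (left_ne_zero_of_mul (left_ne_zero_of_mul h0)) with rfl | h2
      · exact hab ⟨rfl, rfl⟩
      all_goals omega
    rw [expand, Finset.sum_eq_single j, Finset.sum_eq_single i, huu, huu, one_mul, mul_one]
    · intro a _ ha
      exact hzero a j fun h => ha h.1
    · simp
    · intro b _ hb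
      exact Finset.sum_eq_zero fun a _ => hzero a b fun h => hb h.2
    · simp

/-- Iwahori decomposition of `H_m`: each element becomes an element of `U_m` after right
multiplication by some `c ∈ H_m` that lies in `K_m` and on which the linear form `lamU` vanishes. -/
lemma iwahori (hl : 2 ≤ l) (hm : 1 ≤ m) (a : Kgrp p l m ρ) :
    ∃ c : Kgrp p l m ρ, Um p l m ρ (emb p l m ρ (a * c)) ∧ Km p l m ρ (emb p l m ρ c) ∧
      lamU l (emb p l m ρ c) = 0 := by
  have hpp : (1 : ℝ) < p := by exact_mod_cast (Fact.out : p.Prime).one_lt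
  have haK := (Km_toQ_iff m ρ _).1 a.2
  obtain ⟨c, hc1, hc2⟩ := exists_block_decomp hm a.1.1 haK.2
  set u : Matrix (Fin (2*l)) (Fin (2*l)) ℤ_[p] := a.1.1 * c with hu
  have hcQ : ∀ i j : Fin (2*l), expo l m i < expo l m j → toQ p l c i j = 0 := by
    intro i j h
    rw [toQ_apply, hc1 i j h]; rfl
  have huQ : ∀ i j : Fin (2*l), expo l m j ≤ expo l m i →
      toQ p l u i j = (1 : Matrix (Fin (2*l)) (Fin (2*l)) ℚ_[p]) i j := by
    intro i j h
    rw [toQ_apply, hc2 i j h, ← map_one (toQ p l), toQ_apply]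
  -- Modulo `p ^ m` the matrices `u` and `c` agree; one is upper unipotent, the other block lower.
  have hred : redMod p l m u = redMod p l m c := by rw [hu, map_mul, haK.2, one_mul]
  have hredc : redMod p l m c = 1 := by
    ext i j
    rcases lt_or_ge (expo l m i) (expo l m j) with h | h
    · rw [redMod_apply, hc1 i j h, map_zero, Matrix.one_apply_ne]
      rintro rfl
      exact lt_irrefl _ h
    · rw [← hred, redMod_apply, hc2 i j h, ← redMod_apply, map_one]
  have hform : (toQ p l u)ᵀ * Jrho ℚ_[p] l ρ * toQ p l u = Jrho ℚ_[p] l ρ := by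
    apply form_of_block m _ (toQ p l c) huQ hcQ
    calc _ = (toQ p l c)ᵀ * ((toQ p l a.1.1)ᵀ * Jrho ℚ_[p] l ρ * toQ p l a.1.1) * toQ p l c := by
          rw [hu, map_mul, Matrix.transpose_mul]; simp only [Matrix.mul_assoc]
      _ = _ := by rw [haK.1.2]
  have hdet : (toQ p l u).det = 1 := by
    rw [Matrix.det_of_isUpperTriangular]
    · exact Finset.prod_eq_one fun i _ => by rw [huQ i i le_rfl, Matrix.one_apply_eq]
    · intro i j hij
      have hij' : j < i := hij
      rw [huQ i j (expo_mono m (le_of_lt hij')), Matrix.one_apply_ne hij'.ne']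
  have huSO : SO2l l ρ (toQ p l u) := ⟨hdet, hform⟩
  have hcSO : SO2l l ρ (toQ p l c) := SO2l_of_mul haK.1 (by rw [← map_mul]; exact huSO)
  have hcK : Km p l m ρ (toQ p l c) := (Km_toQ_iff m ρ c).2 ⟨hcSO, hredc⟩
  obtain ⟨c', hc'⟩ := Km_lift hcK
  have hcc : c'.1 = c := toQ_injective hc'
  let γ : Kgrp p l m ρ := ⟨c', by change Km p l m ρ (toQ p l c'); rwa [hc']⟩
  have hγ : emb p l m ρ γ = emat p l m * toQ p l c * ematInv p l m := by
    rw [← hc']; rfl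
  have haγ : emb p l m ρ (a * γ) = emat p l m * toQ p l u * ematInv p l m := by
    rw [hu, ← hcc]; rfl
  refine ⟨γ, ⟨⟨emb_SO _, ?_, ?_⟩, emb_Hm _⟩, ⟨emb_SO _, ?_⟩, ?_⟩
  · intro i j hij
    rw [haγ, conj_apply, huQ i j (expo_mono m hij.le), Matrix.one_apply_ne, mul_zero]
    rintro rfl
    exact lt_irrefl _ hij
  · intro i
    rw [haγ, conj_apply, huQ i i le_rfl, Matrix.one_apply_eq, sub_self, zpow_zero, mul_one]
  · intro i j
    have h0 := hcK.2 i j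
    rw [hγ, conj_apply]
    rcases lt_or_ge (expo l m i) (expo l m j) with h | h
    · rw [hcQ i j h] at h0 ⊢
      rwa [mul_zero]
    · by_cases hij : i = j
      · subst hij
        simpa using h0
      · simp only [if_neg hij, sub_zero] at h0 ⊢
        rw [norm_mul, Padic.norm_p_zpow]
        calc _ ≤ 1 * ‖toQ p l c i j‖ := by
              gcongr
              exact zpow_le_one_of_nonpos₀ hpp.le (by omega)
          _ ≤ _ := by rwa [one_mul]
  · rw [hγ]
    apply lamU_eq_zero m hm hl
    intro i j h
    rw [conj_apply, hcQ i j h, mul_zero]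

/-! ### Averaging over the compact group -/

/-- Think of `σ_* μ` as a probability measure on `G` concentrated on a subgroup. If translating `f`
on the right never changes its integral over `a * σ u`, for each `a`, then this integral is the Haar
average of `f` over `G`, hence independent of `a`. As `f` factors through a finite quotient of `G`,
that average is a finite sum. -/
lemma integral_translate {G Q α : Type*} [Group G] [Group Q] [Finite Q] [MeasurableSpace α]
    (φ : G →* Q) (f : G → ℂ) (hf : ∀ a b, φ a = φ b → f a = f b)
    (μ : Measure α) [IsProbabilityMeasure μ] (σ : α → G)
    (hint : ∀ a b, Integrable (fun u => f (a * σ u * b)) μ)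
    (hr : ∀ a b, ∫ u, f (a * σ u * b) ∂μ = ∫ u, f (a * σ u) ∂μ) (a : G) :
    ∫ u, f (a * σ u) ∂μ = ∫ u, f (σ u) ∂μ := by
  have hfin : Finite (G ⧸ φ.ker) := Subgroup.finite_quotient_of_finiteIndex
  have := Fintype.ofFinite (G ⧸ φ.ker)
  let F : G ⧸ φ.ker → ℂ := fun q => f q.out
  have hF : ∀ x : G, F (x : G ⧸ φ.ker) = f x := by
    intro x
    apply hf
    have h1 : ((Quotient.out (x : G ⧸ φ.ker) : G) : G ⧸ φ.ker) = x := QuotientGroup.out_eq' _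
    rw [QuotientGroup.eq, MonoidHom.mem_ker, map_mul, map_inv, inv_mul_eq_one] at h1
    exact h1
  have hsum : ∀ y : G, ∑ q : G ⧸ φ.ker, f (y * q.out) = ∑ q, F q := by
    intro y
    rw [← Equiv.sum_comp (MulAction.toPerm y) F]
    refine Finset.sum_congr rfl fun q _ => ?_
    rw [← hF, ← smul_eq_mul, ← MulAction.Quotient.smul_coe, QuotientGroup.out_eq']
    rfl
  have key : ∀ a : G, (Fintype.card (G ⧸ φ.ker) : ℂ) * ∫ u, f (a * σ u) ∂μ = ∑ q, F q := by
    intro a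
    calc _ = ∑ q : G ⧸ φ.ker, ∫ u, f (a * σ u * q.out) ∂μ := by
          simp only [hr, Finset.sum_const, Finset.card_univ, nsmul_eq_mul]
      _ = ∫ u, ∑ q : G ⧸ φ.ker, f (a * σ u * q.out) ∂μ := by
          rw [integral_finsetSum _ fun q _ => hint a q.out]
      _ = _ := by simp [hsum]
  have hc : (Fintype.card (G ⧸ φ.ker) : ℂ) ≠ 0 := by
    exact_mod_cast Fintype.card_ne_zero
  have := (key a).trans (key 1).symm
  simpa only [one_mul] using mul_left_cancel₀ hc this

lemma isClosed_Um : IsClosed {u | Um p l m ρ u} := by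
  have e : ∀ i j : Fin (2*l), Continuous fun u : Matrix (Fin (2*l)) (Fin (2*l)) ℚ_[p] => u i j :=
    fun i j => continuous_id.matrix_elem i j
  unfold Um USO2l Hm Km SO2l
  simp only [Set.ofPred_and, Set.ofPred_forall]
  have hc : Continuous fun u : Matrix (Fin (2*l)) (Fin (2*l)) ℚ_[p] =>
      ematInv p l m * u * emat p l m := by fun_prop
  refine IsClosed.inter (IsClosed.inter (IsClosed.inter ?_ ?_) (IsClosed.inter ?_ ?_))
    (IsClosed.inter (IsClosed.inter ?_ ?_) ?_)
  · exact isClosed_eq (by fun_prop) continuous_const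
  · exact isClosed_eq (by fun_prop) continuous_const
  · exact isClosed_iInter fun i => isClosed_iInter fun j => isClosed_iInter fun _ =>
      isClosed_eq (e i j) continuous_const
  · exact isClosed_iInter fun i => isClosed_eq (e i i) continuous_const
  · exact isClosed_eq (by fun_prop) continuous_const
  · exact isClosed_eq (by fun_prop) continuous_const
  · refine isClosed_iInter fun i => isClosed_iInter fun j => isClosed_le ?_ continuous_const
    exact ((hc.matrix_elem i j).sub continuous_const).norm

/-- Integral form of the second claim: the function `x ↦ ψ_m(x)⁻¹·W(g·x)` on `H_m` has the same
mean over each left translate of `U_m`. -/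
lemma integral_Um_translate (hp : p ≠ 2) (hl : 2 ≤ l)
    [MeasurableSpace (Matrix (Fin (2*l)) (Fin (2*l)) ℚ_[p])]
    [BorelSpace (Matrix (Fin (2*l)) (Fin (2*l)) ℚ_[p])]
    (ψ₀ : AddChar ℚ_[p] ℂˣ)
    (hψ1 : ∀ x : ℚ_[p], ‖x‖ ≤ 1 → ψ₀ x = 1)
    (W : Matrix (Fin (2*l)) (Fin (2*l)) ℚ_[p] → ℂ)
    (C : ℕ)
    (hWC : ∀ g k : Matrix (Fin (2*l)) (Fin (2*l)) ℚ_[p], SO2l l ρ g → Km p l C ρ k →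
      W (g * k) = W g)
    (hm : 1 ≤ m) (hCm : C ≤ m)
    (μ : Measure (Matrix (Fin (2*l)) (Fin (2*l)) ℚ_[p])) [IsProbabilityMeasure μ]
    (hμU : ∀ᵐ u ∂μ, Um p l m ρ u)
    (hμr : ∀ u₀, Um p l m ρ u₀ → Measure.map (fun u => u * u₀) μ = μ)
    (g : Matrix (Fin (2*l)) (Fin (2*l)) ℚ_[p]) (hg : SO2l l ρ g)
    (a : Kgrp p l m ρ) :
    ∫ u, ((ψ₀ (lamU l (emb p l m ρ a * u)) : ℂˣ) : ℂ)⁻¹ * W (g * (emb p l m ρ a * u)) ∂μ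
      = ∫ u, ((ψ₀ (lamU l u) : ℂˣ) : ℂ)⁻¹ * W (g * u) ∂μ := by
  classical
  have hpp : (1 : ℝ) < p := by exact_mod_cast (Fact.out : p.Prime).one_lt
  let F : Matrix (Fin (2*l)) (Fin (2*l)) ℚ_[p] → ℂ :=
    fun x => ((ψ₀ (lamU l x) : ℂˣ) : ℂ)⁻¹ * W (g * x)
  let f : Kgrp p l m ρ → ℂ := fun x => F (emb p l m ρ x)
  have hinv : ∀ x c : Kgrp p l m ρ, Km p l C ρ (emb p l m ρ c) →
      ψ₀ (lamU l (emb p l m ρ c)) = 1 → f (x * c) = f x := by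
    intro x c h1 h2
    simp only [f, F]
    rw [psi_mul hp hl hm ψ₀ hψ1, h2, mul_one, emb_mul, ← Matrix.mul_assoc,
      hWC _ _ (SO2l_mul hg (emb_SO x)) h1]
  -- Conjugation by `e_m` multiplies entries by at most `p ^ (4ml)`, so `N` makes the principal
  -- congruence subgroup of level `N` land in `K_C` and in the kernel of `ψ_m`.
  set N := C + 4 * m * l with hN
  have : NeZero (p ^ N) := ⟨pow_ne_zero _ (Fact.out : p.Prime).ne_zero⟩
  let φ : Kgrp p l m ρ →* (Matrix (Fin (2*l)) (Fin (2*l)) (ZMod (p ^ N)))ˣ :=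
    (Units.map (redMod p l N).toMonoidHom).comp (Kgrp p l m ρ).subtype
  have hφval : ∀ x : Kgrp p l m ρ, (φ x).1 = redMod p l N x.1.1 := fun _ => rfl
  have hker : ∀ c : Kgrp p l m ρ, φ c = 1 →
      Km p l C ρ (emb p l m ρ c) ∧ ψ₀ (lamU l (emb p l m ρ c)) = 1 := by
    intro c hc
    have hc1 : redMod p l N c.1.1 = redMod p l N 1 := by
      rw [← hφval, hc, map_one]; rfl
    rw [redMod_eq_iff] at hc1
    simp only [map_one] at hc1
    have hsmall : ∀ i j, ‖(emb p l m ρ c - 1) i j‖ ≤ (p : ℝ) ^ (-(C : ℤ)) := by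
      intro i j
      have h1 : (emb p l m ρ c - 1) i j = (p : ℚ_[p]) ^ (expo l m i - expo l m j) *
          (toQ p l c.1.1 i j - (1 : Matrix (Fin (2*l)) (Fin (2*l)) ℚ_[p]) i j) := by
        unfold emb
        rw [Matrix.sub_apply, conj_apply, mul_sub]
        congr 1
        by_cases hij : i = j
        · subst hij; simp
        · rw [Matrix.one_apply_ne hij, mul_zero]
      rw [h1, norm_mul, Padic.norm_p_zpow]
      have hb := expo_bound (l := l) m i j i.2 j.2
      calc _ ≤ (p : ℝ) ^ ((4 * m * l : ℕ) : ℤ) * (p : ℝ) ^ (-(N : ℤ)) := by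
            gcongr
            · exact hpp.le
            · omega
            · exact hc1 i j
        _ = (p : ℝ) ^ (-(C : ℤ)) := by
            rw [← zpow_add₀ (by positivity)]
            congr 1
            rw [hN]
            push_cast
            ring
    refine ⟨⟨emb_SO c, fun i j => ?_⟩, ?_⟩
    · have := hsmall i j
      rwa [Matrix.sub_apply, Matrix.one_apply] at this
    · apply hψ1
      have h1 : lamU l (emb p l m ρ c) = lamU l (emb p l m ρ c - 1) := by
        have h2 := lamU_add (emb p l m ρ c - 1) 1
        rw [sub_add_cancel, lamU_eq_zero m hm hl 1, add_zero] at h2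
        · exact h2
        · intro i j hij
          exact Matrix.one_apply_ne (by rintro rfl; exact lt_irrefl _ hij)
      rw [h1]
      refine (norm_lamU_le hp _ _ (by positivity) hsmall).trans ?_
      exact zpow_le_one_of_nonpos₀ hpp.le (by omega)
  have hf : ∀ x y, φ x = φ y → f x = f y := by
    intro x y hxy
    have h1 : φ (x⁻¹ * y) = 1 := by rw [map_mul, map_inv, hxy, inv_mul_cancel]
    have h2 := hinv x _ (hker _ h1).1 (hker _ h1).2
    rw [mul_inv_cancel_left] at h2
    exact h2.symm
  let σ : Matrix (Fin (2*l)) (Fin (2*l)) ℚ_[p] → Kgrp p l m ρ :=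
    fun u => if h : Um p l m ρ u then (Hm_lift h.2).choose else 1
  have hσ : ∀ u, Um p l m ρ u → emb p l m ρ (σ u) = u := by
    intro u hu
    simp only [σ, dif_pos hu]
    exact (Hm_lift hu.2).choose_spec
  have hrestrict : μ.restrict {u | Um p l m ρ u} = μ := Measure.restrict_eq_self_of_ae_mem hμU
  have hmeas : ∀ x y, AEStronglyMeasurable (fun u => f (x * σ u * y)) μ := by
    intro x y
    rw [← hrestrict]
    refine ContinuousOn.aestronglyMeasurable ?_ isClosed_Um.measurableSet
    intro u hu
    -- The integrand is locally constant on `U_m`.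
    have hev : ∀ᶠ v in nhdsWithin u {u | Um p l m ρ u},
        f (x * σ v * y) = f (x * σ u * y) := by
      have hclose : ∀ i j, ∀ᶠ v in nhdsWithin u {u | Um p l m ρ u},
          ‖(ematInv p l m * v * emat p l m) i j - (ematInv p l m * u * emat p l m) i j‖
            < (p : ℝ) ^ (-(N : ℤ)) := by
        intro i j
        have hc : Continuous fun v : Matrix (Fin (2*l)) (Fin (2*l)) ℚ_[p] =>
            ‖(ematInv p l m * v * emat p l m) i j - (ematInv p l m * u * emat p l m) i j‖ := by
          have hc0 : Continuous fun v : Matrix (Fin (2*l)) (Fin (2*l)) ℚ_[p] =>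
            ematInv p l m * v * emat p l m := by fun_prop
          exact ((hc0.matrix_elem i j).sub continuous_const).norm
        refine (hc.continuousWithinAt.tendsto).eventually_lt_const ?_
        rw [sub_self, norm_zero]
        positivity
      have hall := Filter.eventually_all.2 fun i => Filter.eventually_all.2 (hclose i)
      filter_upwards [hall, self_mem_nhdsWithin] with v hv hvU
      apply hf
      have h1 : ∀ w, Um p l m ρ w →
          toQ p l (σ w).1.1 = ematInv p l m * w * emat p l m := by
        intro w hw
        conv_rhs => rw [← hσ w hw]
        unfold emb
        rw [conjInv_conj]
      have h2 : φ (σ v) = φ (σ u) := by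
        apply Units.ext
        rw [hφval, hφval, redMod_eq_iff]
        intro i j
        rw [h1 v hvU, h1 u hu]
        exact (hv i j).le
      rw [map_mul, map_mul, map_mul, map_mul, h2]
    exact (tendsto_const_nhds.congr' (hev.mono fun v hv => hv.symm))
  have hbdd : ∃ B : ℝ, ∀ x, ‖f x‖ ≤ B := by
    have hfin : (Set.range f).Finite := by
      have : f = (fun q : Set.range φ => f q.2.choose) ∘ Set.rangeFactorization φ := by
        funext x
        apply hf
        exact (Set.rangeFactorization φ x).2.choose_spec.symm
      rw [this]
      exact (Set.finite_range _).subset (Set.range_comp_subset_range _ _)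
    obtain ⟨B, hB⟩ := hfin.isBounded.exists_norm_le
    exact ⟨B, fun x => hB _ ⟨x, rfl⟩⟩
  obtain ⟨B, hB⟩ := hbdd
  have hint : ∀ x y, Integrable (fun u => f (x * σ u * y)) μ := fun x y =>
    Integrable.of_bound (hmeas x y) B (Filter.Eventually.of_forall fun u => hB _)
  have hFf : ∀ x : Kgrp p l m ρ, (fun u => F (emb p l m ρ x * u)) =ᵐ[μ] fun u => f (x * σ u) := by
    intro x
    filter_upwards [hμU] with u hu
    simp only [f, emb_mul, hσ u hu]
  have hr : ∀ x y, ∫ u, f (x * σ u * y) ∂μ = ∫ u, f (x * σ u) ∂μ := by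
    intro x y
    obtain ⟨c, hc1, hc2, hc3⟩ := iwahori hl hm y
    have hcC : Km p l C ρ (emb p l m ρ c) := by
      refine ⟨hc2.1, fun i j => (hc2.2 i j).trans ?_⟩
      exact zpow_le_zpow_right₀ hpp.le (by omega)
    have hcψ : ψ₀ (lamU l (emb p l m ρ c)) = 1 := by rw [hc3, AddChar.map_zero_eq_one]
    have hmul : Measurable fun u : Matrix (Fin (2*l)) (Fin (2*l)) ℚ_[p] =>
        u * emb p l m ρ (y * c) := by
      apply Continuous.measurable
      fun_prop
    have hFm : AEStronglyMeasurable (fun u => F (emb p l m ρ x * u)) μ := by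
      have := hmeas x 1
      simp only [mul_one] at this
      exact this.congr (hFf x).symm
    calc ∫ u, f (x * σ u * y) ∂μ = ∫ u, F (emb p l m ρ x * (u * emb p l m ρ (y * c))) ∂μ := by
          apply integral_congr_ae
          filter_upwards [hμU] with u hu
          rw [← hinv _ c hcC hcψ]
          simp only [f, emb_mul, hσ u hu, Matrix.mul_assoc]
      _ = ∫ u, F (emb p l m ρ x * u) ∂(Measure.map (fun u => u * emb p l m ρ (y * c)) μ) := by
          rw [integral_map hmul.aemeasurable]
          rw [hμr _ hc1]
          exact hFm
      _ = ∫ u, F (emb p l m ρ x * u) ∂μ := by rw [hμr _ hc1]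
      _ = _ := integral_congr_ae (hFf x)
  have key := integral_translate φ f hf μ σ hint hr a
  rw [← integral_congr_ae (hFf a)] at key
  refine key.trans (integral_congr_ae ?_)
  filter_upwards [hμU] with u hu
  simp only [f, F, hσ u hu]

end Howe

/-- Lemma 4.2, properties of Howe vectors. Here
`W_m(g) = ∫_{U_m} ψ_m(u)⁻¹·W(g·u) dμ_m(u)`, where `μ_m` is the Haar probability measure on
the compact group `U_m` (encoded as a probability measure on the matrix space that is
concentrated on `U_m` and invariant under left and right translation by elements of `U_m`).
Then `W_m(I_{2l}) = 1`, and if `m ≥ C` then `W_m(g·h) = ψ_m(h)·W_m(g)` for all `h ∈ H_m`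
and `g ∈ SO_{2l}(J_{2l,ρ})`. -/
theorem statement9 (p : ℕ) [Fact p.Prime] (hp : p ≠ 2) (l : ℕ) (hl : 2 ≤ l)
    [MeasurableSpace (Matrix (Fin (2*l)) (Fin (2*l)) ℚ_[p])]
    [BorelSpace (Matrix (Fin (2*l)) (Fin (2*l)) ℚ_[p])]
    (ρ : ℚ_[p]) (hρ1 : ‖ρ‖ = 1) (hρ : ∀ x : ℚ_[p], x * x ≠ ρ)
    (ψ₀ : AddChar ℚ_[p] ℂˣ)
    (hψ1 : ∀ x : ℚ_[p], ‖x‖ ≤ 1 → ψ₀ x = 1)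
    (hψ2 : ∃ x : ℚ_[p], ‖x‖ ≤ (p : ℝ) ∧ ψ₀ x ≠ 1)
    (W : Matrix (Fin (2*l)) (Fin (2*l)) ℚ_[p] → ℂ)
    (hWU : ∀ u g : Matrix (Fin (2*l)) (Fin (2*l)) ℚ_[p], USO2l l ρ u → SO2l l ρ g →
      W (u * g) = (ψ₀ (lamU l u) : ℂ) * W g)
    (hW1 : W 1 = 1)
    (C : ℕ) (hC : 1 ≤ C)
    (hWC : ∀ g k : Matrix (Fin (2*l)) (Fin (2*l)) ℚ_[p], SO2l l ρ g → Km p l C ρ k →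
      W (g * k) = W g)
    (m : ℕ) (hm : 1 ≤ m)
    (μ : Measure (Matrix (Fin (2*l)) (Fin (2*l)) ℚ_[p])) [IsProbabilityMeasure μ]
    (hμU : μ {u | ¬ Um p l m ρ u} = 0)
    (hμr : ∀ u₀, Um p l m ρ u₀ → Measure.map (fun u => u * u₀) μ = μ)
    (hμl : ∀ u₀, Um p l m ρ u₀ → Measure.map (fun u => u₀ * u) μ = μ) :
    (∫ u, ((psim p l m ψ₀ u : ℂ))⁻¹ * W (1 * u) ∂μ) = 1 ∧
    (C ≤ m → ∀ g h : Matrix (Fin (2*l)) (Fin (2*l)) ℚ_[p], SO2l l ρ g → Hm p l m ρ h →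
      (∫ u, ((psim p l m ψ₀ u : ℂ))⁻¹ * W ((g * h) * u) ∂μ) =
        (psim p l m ψ₀ h : ℂ) * ∫ u, ((psim p l m ψ₀ u : ℂ))⁻¹ * W (g * u) ∂μ) := by
  have hU : ∀ᵐ u ∂μ, Um p l m ρ u := hμU
  simp only [psim_eq m hl ψ₀]
  constructor
  · have h1 : (fun u => ((ψ₀ (lamU l u) : ℂˣ) : ℂ)⁻¹ * W (1 * u)) =ᵐ[μ] fun _ => 1 := by
      filter_upwards [hU] with u hu
      have h2 := hWU u 1 hu.1 SO2l_one
      rw [Matrix.mul_one, hW1, mul_one] at h2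
      rw [Matrix.one_mul, h2, inv_mul_cancel₀ (Units.ne_zero _)]
    rw [integral_congr_ae h1]
    simp
  · intro hCm g h hg hh
    obtain ⟨a, rfl⟩ := Hm_lift hh
    rw [← integral_Um_translate hp hl ψ₀ hψ1 W C hWC hm hCm μ hU hμr g hg a,
      ← integral_const_mul]
    apply integral_congr_ae
    filter_upwards [hU] with u hu
    obtain ⟨b, rfl⟩ := Hm_lift hu.2
    rw [← emb_mul, psi_mul hp hl hm ψ₀ hψ1, Units.val_mul, mul_inv, emb_mul, Matrix.mul_assoc,
      mul_assoc (_ : ℂ)⁻¹, mul_inv_cancel_left₀ (Units.ne_zero _)]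
end
end
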